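/- The contraction operator δ_e on decorated graphs of even type is well defined on the quotient space D_e (i.e., it is compatible with the sign relations on decorations), it satisfies δ_e ∘ δ_e = 0, and it maps D_e^{k,m} into D_e^{k,m+1} for every order k and every degree m. -/

import Mathlib

open scoped Classical

/-!
# The even graph complex `(D_e, δ_e)` and its coboundary operator

We encode a *decorated graph of even type* as follows.  Its vertices are the natural
numbers `0, …, ve + vi - 1`: the labels `0, …, ve - 1` are the external vertices, placed
on the distinguished oriented circle in the (cyclically increasing) order of their labels,
and the labels `ve, …, ve + vi - 1` are the internal vertices (which carry no decoration;
the implicit labels are factored out by the relation below).  The edges are labelled by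
their position in a list, and each edge is recorded as a pair of vertices (it carries no
orientation; the relation below identifies a pair with its swap, with no sign).  Labels
here are 0-indexed, the paper's labels being 1-indexed.
-/

/-- A decorated graph of even type: `ve` external vertices (labels `0,…,ve-1`, lying on
the oriented circle in this cyclic order), `vi` internal vertices (labels
`ve,…,ve+vi-1`), and a list of edges; the edge labelled `α` (0-indexed) is the `α`-th
entry of the list. -/
structure EvenGraph where
  ve : ℕ
  vi : ℕ
  edges : List (ℕ × ℕ)
deriving DecidableEq

namespace EvenGraph

/-- Total number of vertices. -/
def nv (g : EvenGraph) : ℕ := g.ve + g.vi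

/-- The valence of a vertex: the number of edge-ends at it. -/
def valence (g : EvenGraph) (v : ℕ) : ℕ :=
  (g.edges.map fun e => (if e.1 = v then 1 else 0) + (if e.2 = v then 1 else 0)).sum

/-- Two vertices are adjacent if joined by an edge or if both lie on the circle. -/
def adj (g : EvenGraph) (a b : ℕ) : Prop :=
  (∃ e ∈ g.edges, (e.1 = a ∧ e.2 = b) ∨ (e.1 = b ∧ e.2 = a)) ∨
    (a < g.ve ∧ b < g.ve)

/-- Connectivity of the graph (including the distinguished circle). -/
def Connected (g : EvenGraph) : Prop :=
  ∀ a b, a < g.nv → b < g.nv → Relation.ReflTransGen g.adj a b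

/-- A valid decorated graph of even type: edges join actual vertices, internal vertices
are at least trivalent, external vertices carry at least one edge-end, and the graph is
connected. -/
def IsValid (g : EvenGraph) : Prop :=
  (∀ e ∈ g.edges, e.1 < g.nv ∧ e.2 < g.nv) ∧
  (∀ v, g.ve ≤ v → v < g.nv → 3 ≤ g.valence v) ∧
  (∀ v, v < g.ve → 1 ≤ g.valence v) ∧
  g.Connected

/-- Number of edges. -/
def numEdges (g : EvenGraph) : ℕ := g.edges.length

/-- The *order* of a graph: `e - v_i`. -/
def ordZ (g : EvenGraph) : ℤ := (g.numEdges : ℤ) - (g.vi : ℤ)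

/-- The *degree* of a graph: `2e - 3v_i - v_e`. -/
def degZ (g : EvenGraph) : ℤ := 2 * (g.numEdges : ℤ) - 3 * (g.vi : ℤ) - (g.ve : ℤ)

/-- A *regular edge*: neither a small loop nor a chord. -/
def isRegular (g : EvenGraph) (e : ℕ × ℕ) : Prop :=
  e.1 ≠ e.2 ∧ ¬(e.1 < g.ve ∧ e.2 < g.ve)

/-- Two vertices joined by more than one edge. -/
def hasDoubleEdge (g : EvenGraph) : Prop :=
  ∃ a b : Fin g.edges.length, a ≠ b ∧
    (g.edges.get b = g.edges.get a ∨ g.edges.get b = (g.edges.get a).swap)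

/-- An internal small loop. -/
def hasInternalLoop (g : EvenGraph) : Prop :=
  ∃ e ∈ g.edges, e.1 = e.2 ∧ g.ve ≤ e.1

end EvenGraph

/-- Vertex relabelling after merging the vertices `i` and `j`: the merged vertex receives
the label `min i j`, and all labels greater than `max i j` are lowered by one. -/
def mergeMap (i j x : ℕ) : ℕ :=
  if x = i ∨ x = j then min i j else if max i j < x then x - 1 else x

namespace EvenGraph

/-- Contraction of the regular edge labelled `a`: the edge is removed (all higher edge
labels are lowered by one) and its end-points are merged. -/
def contractEdgeAt (g : EvenGraph) (a : Fin g.edges.length) : EvenGraph :=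
  let p := g.edges.get a
  { ve := g.ve
    vi := g.vi - 1
    edges := (g.edges.eraseIdx a).map fun q =>
      (mergeMap p.1 p.2 q.1, mergeMap p.1 p.2 q.2) }

/-- Contraction of the arc running (along the circle orientation) from the external vertex
`i` to the consecutive external vertex `j`.  A short chord joining `i` and `j` becomes an
external small loop at the merged vertex. -/
def contractArc (g : EvenGraph) (i j : ℕ) : EvenGraph where
  ve := g.ve - 1
  vi := g.vi
  edges := g.edges.map fun q =>
    if (q.1 = i ∧ q.2 = j) ∨ (q.1 = j ∧ q.2 = i) then (min i j, min i j)
    else (mergeMap i j q.1, mergeMap i j q.2)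

/-- The arcs of the circle, as ordered pairs of consecutive external vertices (oriented
along the circle). -/
def arcs (g : EvenGraph) : List (ℕ × ℕ) :=
  if 2 ≤ g.ve then ((List.range (g.ve - 1)).map fun i => (i, i + 1)) ++ [(g.ve - 1, 0)]
  else []

end EvenGraph

/-- The arc-contraction sign `σ(i,j)` (0-indexed version of the paper's
`σ(i,j) = (-1)^j` for `j > i` and `(-1)^{i+1}` for `j < i`, which is stated for 1-indexed
labels). -/
def csign (i j : ℕ) : ℝ := if i < j then (-1) ^ (j + 1) else (-1) ^ i

/-- The value of the coboundary operator `δ_e` on a single decorated graph: the signed sum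
of the contractions of all regular edges and all arcs; the sign for the edge labelled `α`
(0-indexed here; the paper's 1-indexed sign is `(-1)^{α+1+v_e}`) is `(-1)^{α+v_e}`.
(On graphs that are `0` in `D_e` by the relations, the operator is extended by `0`.) -/
noncomputable def deltaGenE (g : EvenGraph) : EvenGraph →₀ ℝ :=
  if g.IsValid ∧ ¬g.hasDoubleEdge ∧ ¬g.hasInternalLoop then
    ((List.finRange g.edges.length).map fun a =>
        if g.isRegular (g.edges.get a) then
          ((-1 : ℝ) ^ ((a : ℕ) + g.ve)) • Finsupp.single (g.contractEdgeAt a) (1 : ℝ)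
        else 0).sum
      + (g.arcs.map fun p =>
          csign p.1 p.2 • Finsupp.single (g.contractArc p.1 p.2) (1 : ℝ)).sum
  else 0

/-- The coboundary operator `δ_e` on the free vector space generated by decorated graphs
of even type. -/
noncomputable def deltaFreeE : (EvenGraph →₀ ℝ) →ₗ[ℝ] (EvenGraph →₀ ℝ) :=
  Finsupp.lsum ℝ fun g => LinearMap.toSpanSingleton ℝ (EvenGraph →₀ ℝ) (deltaGenE g)

/-- Relabelling of vertices by a permutation `π` of the internal labels and a cyclic
rotation by `r` of the external labels. -/
def permVertexE (ve vi : ℕ) (π : Equiv.Perm (Fin vi)) (r : ℕ) (v : ℕ) : ℕ :=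
  if v < ve then (v + r) % ve
  else if h : v - ve < vi then ve + (π ⟨v - ve, h⟩ : Fin vi) else v

/-- `EvenRel g g' ε` holds when `g'` is obtained from `g` by a cyclic permutation of the
external labels, an arbitrary relabelling of the (undecorated) internal vertices, a
permutation `τ` of the edge labels, and swaps of the (unoriented) end-point pairs;
`ε = (-1)^{π+l}` is the corresponding sign, where `π` is the order of the cyclic
permutation of the external labels and `l` the order of `τ`. -/
def EvenRel (g g' : EvenGraph) (ε : ℝ) : Prop :=
  g'.ve = g.ve ∧ g'.vi = g.vi ∧
  ∃ (π : Equiv.Perm (Fin g.vi)) (r : ℕ)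
    (h : g'.edges.length = g.edges.length)
    (τ : Equiv.Perm (Fin g.edges.length)) (sw : Fin g.edges.length → Bool),
    (∀ a : Fin g.edges.length,
        g'.edges.get (Fin.cast h.symm (τ a)) =
          (let p := g.edges.get a
           let q := (permVertexE g.ve g.vi π r p.1, permVertexE g.ve g.vi π r p.2)
           if sw a then (q.2, q.1) else q)) ∧
    ε = ((Equiv.Perm.sign (finRotate g.ve ^ r) : ℤ) : ℝ) * ((Equiv.Perm.sign τ : ℤ) : ℝ)

/-- The defining relations of `D_e`: non-graphs are `0`, graphs with a double edge are
`0`, graphs with an internal small loop are `0`, and graphs differing only in the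
decoration are identified up to the sign `(-1)^{π+l}`. -/
def evenRelSet : Set (EvenGraph →₀ ℝ) :=
  {x | ∃ g : EvenGraph, ¬g.IsValid ∧ x = Finsupp.single g 1} ∪
  {x | ∃ g : EvenGraph, g.hasDoubleEdge ∧ x = Finsupp.single g 1} ∪
  {x | ∃ g : EvenGraph, g.hasInternalLoop ∧ x = Finsupp.single g 1} ∪
  {x | ∃ g g' ε, EvenRel g g' ε ∧ x = Finsupp.single g 1 - ε • Finsupp.single g' 1}

/-- The submodule of relations. -/
noncomputable def evenRelations : Submodule ℝ (EvenGraph →₀ ℝ) := Submodule.span ℝ evenRelSet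

/-- The even graph complex `D_e`, the quotient of the free vector space on decorated
graphs of even type by the relations. -/
abbrev De := (EvenGraph →₀ ℝ) ⧸ evenRelations

/-- The subspace `D_e^{k,m}` of `D_e` spanned by the graphs of order `k` and degree `m`. -/
noncomputable def evenPiece (k m : ℤ) : Submodule ℝ De :=
  Submodule.span ℝ {x | ∃ g : EvenGraph,
    g.IsValid ∧ g.ordZ = k ∧ g.degZ = m ∧
    x = Submodule.Quotient.mk (p := evenRelations) (Finsupp.single g 1)}

/-!
List the arcs of the circle, in the order of their initial vertices, and after them the edges. In
this list of cells the contraction of the `k`-th cell carries the sign `(-1) ^ k`, for arcs and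
edges alike. Contracting cell `a` and then cell `b` gives the same graph as contracting cell `b + 1`
and then cell `a` when `a ≤ b`, with the opposite sign, so `δ_e ∘ δ_e = 0` as for simplicial
boundaries. The two contractions agree also as labelled graphs because merging vertices and
lowering the higher labels numbers the classes of an equivalence relation by their least elements.

A cyclic permutation of the external labels rotates the arcs in the same way, so the sign
`(-1) ^ (π + l)` of a change of decoration is the sign of the permutation `ρ` of the cells. Deleting
a cell `k` and its image from `ρ` changes the sign by `(-1) ^ (k + ρ k)`, which makes `δ_e`
compatible with such changes. Exchanging two parallel edges is an odd `ρ` that fixes the graph; it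
makes the contractions of a graph with a double edge cancel.

If the circle is counted in the valence, then being a valid graph means that all vertices, external
or internal, are at least trivalent, and merging two vertices of valence at least `3` along a cell
leaves valence at least `4`.
-/

namespace EvenGraph

section OrderedQuotient

variable {α β γ : Type*}

/-- `s` enumerates, in increasing order, the least elements of the fibres of `q`.  Thus `q` is the
quotient by its kernel, the classes being numbered in the order of their least elements; merging
vertices and lowering the higher labels is such a quotient. -/
structure IsLeastSection [Preorder α] [Preorder β] (q : α → β) (s : β → α) : Prop where
  strictMono : StrictMono s
  leftInverse : Function.LeftInverse q s
  le : ∀ x, s (q x) ≤ x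

namespace IsLeastSection

theorem comp [Preorder α] [PartialOrder β] [Preorder γ] {q : α → β} {s : β → α} {q' : β → γ}
    {s' : γ → β} (h' : IsLeastSection q' s') (h : IsLeastSection q s) :
    IsLeastSection (q' ∘ q) (s ∘ s') where
  strictMono := h.strictMono.comp h'.strictMono
  leftInverse := h.leftInverse.comp h'.leftInverse
  le x := (h.strictMono.monotone (h'.le (q x))).trans (h.le x)

theorem mem_range_iff [PartialOrder α] [Preorder β] {q : α → β} {s : β → α}
    (h : IsLeastSection q s) {x : α} :
    x ∈ Set.range s ↔ ∀ y, q y = q x → x ≤ y := by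
  constructor
  · rintro ⟨z, rfl⟩ y hy
    rw [h.leftInverse] at hy
    exact hy ▸ h.le y
  · exact fun hx => ⟨q x, (h.le x).antisymm (hx _ (h.leftInverse _))⟩

theorem eq_of_ker_eq [PartialOrder α] [LinearOrder β] [WellFoundedLT β] {q q' : α → β}
    {s s' : β → α} (h : IsLeastSection q s) (h' : IsLeastSection q' s')
    (hker : ∀ x y, q x = q y ↔ q' x = q' y) : q = q' := by
  have hs : s = s' := by
    rw [← h.strictMono.range_inj h'.strictMono]
    ext x
    simp only [h.mem_range_iff, h'.mem_range_iff, hker]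
  funext x
  have hx : q' (s (q x)) = q' x := (hker _ _).1 (h.leftInverse _)
  rwa [hs, h'.leftInverse] at hx

end IsLeastSection

end OrderedQuotient

/-- The increasing enumeration of the natural numbers other than `k`: the version of
`Fin.succAbove` on `ℕ`. -/
def skip (k b : ℕ) : ℕ := if b < k then b else b + 1

theorem skip_of_lt {k b : ℕ} (h : b < k) : skip k b = b := if_pos h

theorem skip_of_le {k b : ℕ} (h : k ≤ b) : skip k b = b + 1 := if_neg h.not_gt

theorem eraseIdx_range {n : ℕ} (h : k < n) :
    (List.range n).eraseIdx k = (List.range (n - 1)).map (skip k) := by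
  refine List.ext_getElem (by simp [List.length_eraseIdx, h]) fun i _ _ => ?_
  simp only [List.getElem_eraseIdx, List.getElem_range, List.getElem_map, skip, dite_eq_ite]

theorem eraseIdx_eraseIdx {α : Type*} (l : List α) {a b : ℕ} (hab : a ≤ b) :
    (l.eraseIdx a).eraseIdx b = (l.eraseIdx (b + 1)).eraseIdx a := by
  refine List.ext_getElem? fun i => ?_
  grind

theorem sum_map_range {M : Type*} [AddCommMonoid M] (n : ℕ) (f : ℕ → M) :
    ((List.range n).map f).sum = ∑ k ∈ Finset.range n, f k := rfl

theorem sum_sum_eq_zero_of_antisymm {M : Type*} [AddCommMonoid M] (n : ℕ) (F : ℕ → ℕ → M)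
    (h : ∀ a b, a ≤ b → F a b + F (b + 1) a = 0) :
    ∑ a ∈ Finset.range (n + 1), ∑ b ∈ Finset.range n, F a b = 0 := by
  rw [← Finset.sum_product']
  refine Finset.sum_involution
    (fun x _ => if x.1 ≤ x.2 then (x.2 + 1, x.1) else (x.2, x.1 - 1)) ?_ ?_ ?_ ?_
  · rintro ⟨a, b⟩ -
    dsimp only
    split_ifs with hab
    · exact h a b hab
    · obtain ⟨c, rfl⟩ : ∃ c, a = c + 1 := ⟨a - 1, by omega⟩
      rw [add_comm]
      exact h b c (by omega)
  · grind
  · grind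
  · grind

theorem coe_succAbove {n : ℕ} (k : Fin (n + 1)) (b : Fin n) :
    (k.succAbove b : ℕ) = skip k b := by
  rcases lt_or_ge (b : ℕ) k with h | h
  · rw [skip_of_lt h, Fin.succAbove_of_castSucc_lt _ _ h, Fin.val_castSucc]
  · rw [skip_of_le h, Fin.succAbove_of_le_castSucc _ _ h, Fin.val_succ]

theorem exists_perm_succAbove {n : ℕ} (τ : Equiv.Perm (Fin (n + 1))) (a : Fin (n + 1)) :
    ∃ τ' : Equiv.Perm (Fin n), (∀ b, τ (a.succAbove b) = (τ a).succAbove (τ' b)) ∧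
      Equiv.Perm.sign τ = (-1) ^ ((a : ℕ) + (τ a : ℕ)) * Equiv.Perm.sign τ' := by
  let ρ : Equiv.Perm (Fin (n + 1)) := (τ a).cycleRange * τ * a.cycleRange⁻¹
  obtain ⟨⟨p, τ'⟩, hρ⟩ := Equiv.Perm.decomposeFin.symm.surjective ρ
  obtain rfl : p = 0 := by
    rw [← Equiv.Perm.decomposeFin_symm_apply_zero p τ', hρ]
    have : a.cycleRange⁻¹ 0 = a := by rw [Equiv.Perm.inv_eq_iff_eq, Fin.cycleRange_self]
    simp only [ρ, Equiv.Perm.mul_apply, this, Fin.cycleRange_self]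
  have hs (b : Fin n) : ρ b.succ = (τ' b).succ := by
    rw [← hρ, Equiv.Perm.decomposeFin_symm_apply_succ, Equiv.swap_self, Equiv.refl_apply]
  refine ⟨τ', fun b => ?_, ?_⟩
  · refine (τ a).cycleRange.injective ?_
    rw [Fin.cycleRange_succAbove, ← hs, ← Fin.cycleRange_succAbove a b]
    simp only [ρ, Equiv.Perm.mul_apply, Equiv.Perm.inv_def, Equiv.symm_apply_apply]
  · have hsign : Equiv.Perm.sign τ' = (-1) ^ ((a : ℕ) + (τ a : ℕ)) * Equiv.Perm.sign τ := by
      have hτ' : Equiv.Perm.sign ρ = Equiv.Perm.sign τ' := by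
        rw [← hρ, Equiv.Perm.decomposeFin.symm_sign, if_pos rfl, one_mul]
      rw [← hτ', Equiv.Perm.sign_mul, Equiv.Perm.sign_mul, Equiv.Perm.sign_inv,
        Fin.sign_cycleRange, Fin.sign_cycleRange, mul_comm, ← mul_assoc, pow_add]
    rw [hsign, ← mul_assoc, Int.units_mul_self, one_mul]

theorem mergeMap_symm (i j : ℕ) : mergeMap i j = mergeMap j i := by
  funext x
  simp only [mergeMap, or_comm, min_comm, max_comm]

theorem isLeastSection_mergeMap {i j : ℕ} (h : i ≠ j) :
    IsLeastSection (mergeMap i j) (skip (max i j)) where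
  strictMono x y hxy := by grind [skip]
  leftInverse x := by grind [skip, mergeMap]
  le x := by grind [skip, mergeMap]

theorem mergeMap_eq_iff {i j : ℕ} (h : i ≠ j) (x y : ℕ) :
    mergeMap i j x = mergeMap i j y ↔ x = y ∨ x = i ∧ y = j ∨ x = j ∧ y = i := by
  grind [mergeMap]

theorem mergeMap_comm {i j k l : ℕ} (hij : i ≠ j) (hkl : k ≠ l)
    (h : mergeMap i j k ≠ mergeMap i j l) :
    mergeMap (mergeMap i j k) (mergeMap i j l) ∘ mergeMap i j =
      mergeMap (mergeMap k l i) (mergeMap k l j) ∘ mergeMap k l := by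
  have h' : mergeMap k l i ≠ mergeMap k l j := by
    rw [Ne, mergeMap_eq_iff hkl]
    rw [Ne, mergeMap_eq_iff hij] at h
    tauto
  refine ((isLeastSection_mergeMap h).comp (isLeastSection_mergeMap hij)).eq_of_ker_eq
    ((isLeastSection_mergeMap h').comp (isLeastSection_mergeMap hkl)) fun x y => ?_
  simp only [Function.comp_apply, mergeMap_eq_iff h, mergeMap_eq_iff h', mergeMap_eq_iff hij,
    mergeMap_eq_iff hkl]
  grind

theorem mergeMap_of_lt_max {i j x : ℕ} (h : x < max i j) : mergeMap i j x = x := by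
  grind [mergeMap]

theorem mergeMap_lt {i j x n : ℕ} (hij : i ≠ j) (hi : i < n) (hj : j < n) (hx : x < n) :
    mergeMap i j x < n - 1 := by
  grind [mergeMap]

/-- The pair of vertices `q` after the end-points of the pair `p` have been merged. -/
def mergeEdge (p q : ℕ × ℕ) : ℕ × ℕ := q.map (mergeMap p.1 p.2) (mergeMap p.1 p.2)

theorem mergeEdge_comp_mergeEdge {p q : ℕ × ℕ} (hp : p.1 ≠ p.2) (hq : q.1 ≠ q.2)
    (h : (mergeEdge p q).1 ≠ (mergeEdge p q).2) :
    mergeEdge (mergeEdge p q) ∘ mergeEdge p = mergeEdge (mergeEdge q p) ∘ mergeEdge q := by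
  have hcomm := congrFun (mergeMap_comm hp hq h)
  exact funext fun e => Prod.ext (hcomm e.1) (hcomm e.2)

/-- The arc of a circle with `ve` external vertices that starts at the vertex `i`. -/
def arc (ve i : ℕ) : ℕ × ℕ := (i, (i + 1) % ve)

theorem mergeEdge_arc_arc {ve i b : ℕ} (hi : i < ve) (hb : b < ve - 1) :
    mergeEdge (arc ve i) (arc ve (skip i b)) = arc (ve - 1) b := by
  have hmod {n x : ℕ} (hx : x < n) : (x + 1) % n = if x + 1 = n then 0 else x + 1 := by
    split_ifs with h
    · rw [h, Nat.mod_self]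
    · exact Nat.mod_eq_of_lt (by omega)
  have hs : skip i b < ve := by grind [skip]
  simp only [mergeEdge, arc, Prod.map, hmod hi, hmod hb, hmod hs]
  grind [skip, mergeMap]

/-- The list of one-dimensional cells of the graph: first the arcs of the circle, each labelled by
its initial vertex, then the edges.  In this numbering the contraction of the cell `k` carries the
sign `(-1) ^ k`, for arcs and edges alike.  For `ve = 1` the only arc is a loop. -/
def cells (g : EvenGraph) : List (ℕ × ℕ) := (List.range g.ve).map (arc g.ve) ++ g.edges

/-- The pair of end-points of the cell `k`; the pair `(0, 0)` if there is no such cell. -/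
def cell (g : EvenGraph) (k : ℕ) : ℕ × ℕ := g.cells.getD k (0, 0)

/-- The cell `k` is an arc with distinct end-points or a regular edge. -/
def Contractible (g : EvenGraph) (k : ℕ) : Prop :=
  (g.cell k).1 ≠ (g.cell k).2 ∧ (k < g.ve ∨ ¬((g.cell k).1 < g.ve ∧ (g.cell k).2 < g.ve))

/-- The graph obtained by contracting the cell `k`. -/
def contract (g : EvenGraph) (k : ℕ) : EvenGraph where
  ve := if k < g.ve then g.ve - 1 else g.ve
  vi := if k < g.ve then g.vi else g.vi - 1
  edges := (if k < g.ve then g.edges else g.edges.eraseIdx (k - g.ve)).map (mergeEdge (g.cell k))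

section Contraction

variable {g : EvenGraph} {k : ℕ}

theorem length_cells (g : EvenGraph) : g.cells.length = g.ve + g.edges.length := by
  simp only [cells, List.length_append, List.length_map, List.length_range]

theorem ext_cells {g' : EvenGraph} (hve : g.ve = g'.ve) (hvi : g.vi = g'.vi)
    (h : g.cells = g'.cells) : g = g' := by
  obtain ⟨ve, vi, edges⟩ := g
  obtain ⟨ve', vi', edges'⟩ := g'
  obtain rfl : ve = ve' := hve
  obtain rfl : vi = vi' := hvi
  exact congrArg (EvenGraph.mk ve vi) (List.append_cancel_left h)

theorem cell_of_lt_ve (h : k < g.ve) : g.cell k = arc g.ve k := by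
  rw [cell, cells, List.getD_append _ _ _ _ (by simpa only [List.length_map, List.length_range])]
  simp only [List.getD_eq_getElem?_getD, List.getElem?_map, List.getElem?_range h, Option.map_some,
    Option.getD_some]

theorem cell_ve_add (a : Fin g.edges.length) : g.cell (g.ve + a) = g.edges.get a := by
  have hlen : ((List.range g.ve).map (arc g.ve)).length = g.ve := by
    rw [List.length_map, List.length_range]
  rw [cell, cells, List.getD_append_right _ _ _ _ (by omega), hlen, Nat.add_sub_cancel_left,
    List.getD_eq_getElem _ _ a.2, List.get_eq_getElem]

theorem cell_lt_ve (h : k < g.ve) : (g.cell k).1 < g.ve ∧ (g.cell k).2 < g.ve := by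
  rw [cell_of_lt_ve h]
  exact ⟨h, Nat.mod_lt _ (by omega)⟩

theorem Contractible.lt_length (hk : g.Contractible k) : k < g.cells.length := by
  by_contra h
  exact hk.1 (by rw [cell, List.getD_eq_default _ _ (by omega)])

theorem Contractible.ve_le_max (hk : g.Contractible k) (h : g.ve ≤ k) :
    g.ve ≤ max (g.cell k).1 (g.cell k).2 := by
  have := hk.2
  omega

theorem cells_contract (hk : g.Contractible k) :
    (g.contract k).cells = (g.cells.eraseIdx k).map (mergeEdge (g.cell k)) := by
  have hlen : ((List.range g.ve).map (arc g.ve)).length = g.ve := by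
    rw [List.length_map, List.length_range]
  by_cases h : k < g.ve
  · rw [cells, cells, List.eraseIdx_append_of_lt_length (by rwa [hlen]), List.map_append,
      List.eraseIdx_map, eraseIdx_range h]
    simp only [contract, if_pos h, List.map_map]
    refine congrArg (· ++ _) (List.map_congr_left fun b hb => ?_)
    rw [Function.comp_apply, Function.comp_apply, cell_of_lt_ve h,
      mergeEdge_arc_arc h (List.mem_range.1 hb)]
  · rw [cells, cells, List.eraseIdx_append_of_length_le (by omega), List.map_append, hlen]
    simp only [contract, if_neg h, List.map_map]
    refine congrArg (· ++ _) (List.map_congr_left fun i hi => ?_)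
    have hi : i < g.ve := List.mem_range.1 hi
    have hmax := hk.ve_le_max (not_lt.1 h)
    exact (Prod.ext (mergeMap_of_lt_max (hi.trans_le hmax))
      (mergeMap_of_lt_max ((Nat.mod_lt _ (by omega)).trans_le hmax))).symm

theorem length_cells_contract (hk : g.Contractible k) :
    (g.contract k).cells.length = g.cells.length - 1 := by
  rw [cells_contract hk, List.length_map, List.length_eraseIdx_of_lt hk.lt_length]

theorem cell_contract (hk : g.Contractible k) (b : ℕ) :
    (g.contract k).cell b = mergeEdge (g.cell k) (g.cell (skip k b)) := by
  have hzero : mergeEdge (g.cell k) (0, 0) = (0, 0) := by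
    have : mergeMap (g.cell k).1 (g.cell k).2 0 = 0 := by grind [mergeMap]
    simp only [mergeEdge, Prod.map, this]
  rw [cell, cells_contract hk, ← hzero, List.getD_map]
  refine congrArg (mergeEdge (g.cell k)) ?_
  rw [cell, List.getD_eq_getElem?_getD, List.getElem?_eraseIdx, List.getD_eq_getElem?_getD, skip,
    ← apply_ite (g.cells[·]?)]

theorem mergeMap_lt_contract_ve_iff (hk : g.Contractible k) (x : ℕ) :
    mergeMap (g.cell k).1 (g.cell k).2 x < (g.contract k).ve ↔
      x < g.ve ∨ (x = (g.cell k).1 ∨ x = (g.cell k).2) ∧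
        ((g.cell k).1 < g.ve ∨ (g.cell k).2 < g.ve) := by
  obtain ⟨hne, hk⟩ := hk
  by_cases h : k < g.ve
  · have := cell_lt_ve h
    grind [contract, mergeMap]
  · grind [contract, mergeMap]

theorem lt_contract_ve_iff (k b : ℕ) : b < (g.contract k).ve ↔ skip k b < g.ve := by
  grind [contract, skip]

theorem contractible_contract_iff (hk : g.Contractible k) (b : ℕ) :
    (g.contract k).Contractible b ↔
      mergeMap (g.cell k).1 (g.cell k).2 (g.cell (skip k b)).1 ≠
        mergeMap (g.cell k).1 (g.cell k).2 (g.cell (skip k b)).2 ∧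
      (skip k b < g.ve ∨
        ¬(mergeMap (g.cell k).1 (g.cell k).2 (g.cell (skip k b)).1 < (g.contract k).ve ∧
          mergeMap (g.cell k).1 (g.cell k).2 (g.cell (skip k b)).2 < (g.contract k).ve)) := by
  rw [Contractible, cell_contract hk, lt_contract_ve_iff]
  rfl

theorem contractible_contract_comm {a b : ℕ} (hab : a ≤ b) :
    g.Contractible a ∧ (g.contract a).Contractible b ↔
      g.Contractible (b + 1) ∧ (g.contract (b + 1)).Contractible a := by
  have key {a b c d : ℕ} (hc : skip a b = c) (hd : skip c d = a) (ha : g.Contractible a)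
      (hb : (g.contract a).Contractible b) :
      g.Contractible c ∧ (g.contract c).Contractible d := by
    rw [contractible_contract_iff ha, mergeMap_lt_contract_ve_iff ha,
      mergeMap_lt_contract_ve_iff ha, hc, Ne, mergeMap_eq_iff ha.1] at hb
    have hext := @cell_lt_ve g
    have hc' : g.Contractible c := by
      unfold Contractible at *
      grind
    refine ⟨hc', ?_⟩
    rw [contractible_contract_iff hc', mergeMap_lt_contract_ve_iff hc',
      mergeMap_lt_contract_ve_iff hc', hd, Ne, mergeMap_eq_iff hc'.1]
    unfold Contractible at *
    grind
  have hs := skip_of_le hab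
  have hs' : skip (b + 1) a = a := skip_of_lt (Nat.lt_succ_of_le hab)
  exact ⟨fun h => key hs hs' h.1 h.2, fun h => key hs' hs h.1 h.2⟩

theorem contract_contract {a b : ℕ} (hab : a ≤ b) (ha : g.Contractible a)
    (hb : (g.contract a).Contractible b) :
    (g.contract a).contract b = (g.contract (b + 1)).contract a := by
  obtain ⟨hb', ha'⟩ := (contractible_contract_comm hab).1 ⟨ha, hb⟩
  refine ext_cells (by grind [contract]) (by grind [contract]) ?_
  have hcomp : mergeEdge ((g.contract a).cell b) ∘ mergeEdge (g.cell a) =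
      mergeEdge ((g.contract (b + 1)).cell a) ∘ mergeEdge (g.cell (b + 1)) := by
    have hne := hb.1
    rw [cell_contract ha, skip_of_le hab] at hne ⊢
    rw [cell_contract hb', skip_of_lt (Nat.lt_succ_of_le hab)]
    exact mergeEdge_comp_mergeEdge ha.1 hb'.1 hne
  rw [cells_contract hb, cells_contract ha, cells_contract ha', cells_contract hb',
    List.eraseIdx_map, List.eraseIdx_map, List.map_map, List.map_map, hcomp,
    eraseIdx_eraseIdx _ hab]

end Contraction

/-- The class of a decorated graph in `De`. -/
noncomputable def cls (g : EvenGraph) : De := Submodule.Quotient.mk (Finsupp.single g 1)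

/-- The alternating sum of the contractions of all contractible cells: the value of the coboundary
operator on a graph, without the convention that it vanishes on the graphs that are zero in `De`. -/
noncomputable def cobound (g : EvenGraph) : De :=
  ∑ k ∈ Finset.range g.cells.length,
    if g.Contractible k then (-1 : ℝ) ^ k • cls (g.contract k) else 0

/-- The condition under which `deltaGenE` is the signed sum of contractions. -/
def IsAdmissible (g : EvenGraph) : Prop := g.IsValid ∧ ¬g.hasDoubleEdge ∧ ¬g.hasInternalLoop

section Coboundary

variable {g : EvenGraph}

theorem contractible_iff_two_le {k : ℕ} (hk : k < g.ve) : g.Contractible k ↔ 2 ≤ g.ve := by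
  rw [Contractible, and_iff_left (Or.inl hk), cell_of_lt_ve hk, arc]
  rcases (Nat.succ_le_of_lt hk).eq_or_lt with h | h
  · simp only [← h, Nat.mod_self]
    omega
  · rw [Nat.mod_eq_of_lt h]
    omega

theorem arcs_eq_map_arc (h : 2 ≤ g.ve) : g.arcs = (List.range g.ve).map (arc g.ve) := by
  obtain ⟨n, hn⟩ : ∃ n, g.ve = n + 1 := ⟨g.ve - 1, by omega⟩
  rw [arcs, if_pos h, hn, List.range_succ, List.map_append, Nat.add_sub_cancel]
  refine congrArg₂ _ (List.map_congr_left fun i hi => ?_) ?_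
  · rw [arc, Nat.mod_eq_of_lt (Nat.succ_lt_succ (List.mem_range.1 hi))]
  · rw [List.map_singleton, arc, Nat.mod_self]

theorem csign_arc {n i : ℕ} (hi : i < n) :
    csign (arc n i).1 (arc n i).2 = (-1) ^ i := by
  rcases (Nat.succ_le_of_lt hi).eq_or_lt with h | h
  · simp only [arc, csign, ← h, Nat.mod_self, Nat.not_lt_zero, if_false]
  · simp only [arc, csign, Nat.mod_eq_of_lt h, Nat.lt_succ_self, if_true, pow_succ, mul_neg,
      mul_one, neg_neg]

theorem contractArc_arc {i : ℕ} (hi : i < g.ve) :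
    g.contractArc (arc g.ve i).1 (arc g.ve i).2 = g.contract i := by
  simp only [contractArc, contract, if_pos hi, cell_of_lt_ve hi]
  refine congrArg _ (List.map_congr_left fun q _ => ?_)
  split_ifs with h
  · rcases h with h | h <;> simp only [mergeEdge, Prod.map, h, mergeMap, true_or, or_true, if_true]
  · rfl

theorem contractEdgeAt_eq_contract (a : Fin g.edges.length) :
    g.contractEdgeAt a = g.contract (g.ve + a) := by
  have ha : ¬g.ve + (a : ℕ) < g.ve := by omega
  simp only [contractEdgeAt, contract, if_neg ha, cell_ve_add, Nat.add_sub_cancel_left]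
  rfl

theorem isRegular_get_iff (a : Fin g.edges.length) :
    g.isRegular (g.edges.get a) ↔ g.Contractible (g.ve + a) := by
  have ha : ¬g.ve + (a : ℕ) < g.ve := by omega
  simp only [isRegular, Contractible, cell_ve_add, ha, false_or]

theorem mk_sum_arcs :
    (Submodule.Quotient.mk (g.arcs.map fun p =>
        csign p.1 p.2 • Finsupp.single (g.contractArc p.1 p.2) (1 : ℝ)).sum : De) =
      ∑ k ∈ Finset.range g.ve,
        if g.Contractible k then (-1 : ℝ) ^ k • cls (g.contract k) else 0 := by
  by_cases h : 2 ≤ g.ve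
  · rw [arcs_eq_map_arc h, List.map_map, sum_map_range, ← Submodule.mkQ_apply, map_sum]
    refine Finset.sum_congr rfl fun k hk => ?_
    have hk := Finset.mem_range.1 hk
    rw [if_pos ((contractible_iff_two_le hk).2 h), Function.comp_apply, csign_arc hk,
      contractArc_arc hk, map_smul]
    rfl
  · rw [arcs, if_neg h, List.map_nil, List.sum_nil, Submodule.Quotient.mk_zero, eq_comm]
    exact Finset.sum_eq_zero fun k hk =>
      if_neg ((contractible_iff_two_le (Finset.mem_range.1 hk)).not.2 h)

theorem mk_sum_edges :
    (Submodule.Quotient.mk ((List.finRange g.edges.length).map fun a =>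
        if g.isRegular (g.edges.get a) then
          ((-1 : ℝ) ^ ((a : ℕ) + g.ve)) • Finsupp.single (g.contractEdgeAt a) (1 : ℝ)
        else 0).sum : De) =
      ∑ a ∈ Finset.range g.edges.length, if g.Contractible (g.ve + a) then
        (-1 : ℝ) ^ (g.ve + a) • cls (g.contract (g.ve + a)) else 0 := by
  rw [Finset.sum_range, ← List.ofFn_eq_map, List.sum_ofFn, ← Submodule.mkQ_apply, map_sum]
  refine Finset.sum_congr rfl fun a _ => ?_
  rw [apply_ite evenRelations.mkQ, map_zero, map_smul, add_comm (a : ℕ),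
    contractEdgeAt_eq_contract]
  exact if_congr (isRegular_get_iff a) rfl rfl

theorem mk_deltaGenE (h : g.IsAdmissible) : Submodule.Quotient.mk (deltaGenE g) = g.cobound := by
  rw [IsAdmissible] at h
  rw [deltaGenE, if_pos h, Submodule.Quotient.mk_add, mk_sum_arcs, mk_sum_edges, cobound,
    length_cells, Finset.sum_range_add, add_comm]

theorem sum_cobound_contract (g : EvenGraph) :
    ∑ k ∈ Finset.range g.cells.length,
      (if g.Contractible k then (-1 : ℝ) ^ k • (g.contract k).cobound else 0) = 0 := by
  let F (a b : ℕ) : De := if g.Contractible a ∧ (g.contract a).Contractible b then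
    (-1 : ℝ) ^ (a + b) • cls ((g.contract a).contract b) else 0
  have hF (k : ℕ) : (if g.Contractible k then (-1 : ℝ) ^ k • (g.contract k).cobound else 0) =
      ∑ b ∈ Finset.range (g.cells.length - 1), F k b := by
    by_cases hk : g.Contractible k
    · simp only [cobound, length_cells_contract hk, Finset.smul_sum, smul_ite, smul_smul, smul_zero,
        F, hk, true_and, pow_add, if_true]
    · simp only [F, hk, false_and, if_false, Finset.sum_const_zero]
  simp only [hF]
  cases hn : g.cells.length with
  | zero => rfl
  | succ n =>
    refine sum_sum_eq_zero_of_antisymm n F fun a b hab => ?_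
    by_cases h : g.Contractible a ∧ (g.contract a).Contractible b
    · have h' := (contractible_contract_comm hab).1 h
      simp only [F]
      rw [if_pos h, if_pos h', contract_contract hab h.1 h.2, ← add_smul, add_right_comm, pow_succ,
        add_comm b, mul_neg_one, add_neg_cancel, zero_smul]
    · have h' := (contractible_contract_comm hab).not.1 h
      simp only [F]
      rw [if_neg h, if_neg h', add_zero]

end Coboundary

/-- The unordered pair of end-points of an edge. -/
def ends (e : ℕ × ℕ) : Sym2 ℕ := s(e.1, e.2)

/-- The number of end-points of `e` equal to `v`. -/
def endCount (v : ℕ) (e : ℕ × ℕ) : ℕ := (if e.1 = v then 1 else 0) + (if e.2 = v then 1 else 0)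

/-- The valence of a vertex in the graph that includes the circle. -/
def cellValence (g : EvenGraph) (v : ℕ) : ℕ := (g.cells.map (endCount v)).sum

section Validity

variable {g : EvenGraph} {k : ℕ}

theorem sum_endCount_arc (n v : ℕ) :
    ∑ i ∈ Finset.range n, endCount v (arc n i) = if v < n then 2 else 0 := by
  have hsucc : ∑ i ∈ Finset.range n, (if (i + 1) % n = v then 1 else 0) =
      ∑ i ∈ Finset.range n, if i = v then 1 else 0 := by
    cases n with
    | zero => rfl
    | succ n =>
      rw [Finset.sum_range_succ, Nat.mod_self, Finset.sum_range_succ' (fun i => ite (i = v) 1 0)]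
      refine congrArg (· + _) (Finset.sum_congr rfl fun i hi => ?_)
      rw [Nat.mod_eq_of_lt (Nat.succ_lt_succ (Finset.mem_range.1 hi))]
  have hdef (i : ℕ) : endCount v (arc n i) =
      (if i = v then 1 else 0) + if (i + 1) % n = v then 1 else 0 := rfl
  simp only [hdef, Finset.sum_add_distrib, hsucc, Finset.sum_ite_eq', Finset.mem_range]
  split_ifs <;> rfl

theorem cellValence_eq (g : EvenGraph) (v : ℕ) :
    g.cellValence v = g.valence v + if v < g.ve then 2 else 0 := by
  rw [cellValence, cells, List.map_append, List.sum_append, List.map_map, sum_map_range, add_comm,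
    ← sum_endCount_arc]
  rfl

theorem forall_mem_cells_lt_iff :
    (∀ e ∈ g.cells, e.1 < g.nv ∧ e.2 < g.nv) ↔ ∀ e ∈ g.edges, e.1 < g.nv ∧ e.2 < g.nv := by
  refine ⟨fun h e he => h e (List.mem_append_right _ he), fun h e he => ?_⟩
  rcases List.mem_append.1 he with he | he
  · obtain ⟨i, hi, rfl⟩ := List.mem_map.1 he
    have hi : i < g.ve := List.mem_range.1 hi
    have hmod : (i + 1) % g.ve < g.ve := Nat.mod_lt _ (by omega)
    exact ⟨hi.trans_le (Nat.le_add_right _ _), hmod.trans_le (Nat.le_add_right _ _)⟩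
  · exact h e he

theorem isValid_iff :
    g.IsValid ↔ (∀ e ∈ g.cells, e.1 < g.nv ∧ e.2 < g.nv) ∧
      (∀ v < g.nv, 3 ≤ g.cellValence v) ∧ g.Connected := by
  have hval : (∀ v < g.nv, 3 ≤ g.cellValence v) ↔
      (∀ v, g.ve ≤ v → v < g.nv → 3 ≤ g.valence v) ∧ ∀ v, v < g.ve → 1 ≤ g.valence v := by
    simp only [cellValence_eq, nv]
    grind
  rw [IsValid, forall_mem_cells_lt_iff, hval, and_assoc]

theorem cell_mem (hk : k < g.cells.length) : g.cell k ∈ g.cells := by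
  rw [cell, List.getD_eq_getElem _ _ hk]
  exact List.getElem_mem hk

theorem cell_cons_eraseIdx_perm (hk : k < g.cells.length) :
    (g.cell k :: g.cells.eraseIdx k).Perm g.cells := by
  rw [cell, List.getD_eq_getElem _ _ hk]
  exact List.getElem_cons_eraseIdx_perm hk

theorem adj_of_mem_cells {e : ℕ × ℕ} (he : e ∈ g.cells) : g.adj e.1 e.2 := by
  rcases List.mem_append.1 he with he | he
  · obtain ⟨i, hi, rfl⟩ := List.mem_map.1 he
    have hi : i < g.ve := List.mem_range.1 hi
    exact Or.inr ⟨hi, Nat.mod_lt _ (by omega)⟩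
  · exact Or.inl ⟨e, he, Or.inl ⟨rfl, rfl⟩⟩

theorem adj_symm {a b : ℕ} (h : g.adj a b) : g.adj b a :=
  h.imp (fun ⟨e, he, h⟩ => ⟨e, he, h.symm⟩) And.symm

theorem IsValid.cell_lt (hg : g.IsValid) (hk : g.Contractible k) :
    (g.cell k).1 < g.nv ∧ (g.cell k).2 < g.nv :=
  (isValid_iff.1 hg).1 _ (cell_mem hk.lt_length)

theorem nv_contract (hg : g.IsValid) (hk : g.Contractible k) : (g.contract k).nv = g.nv - 1 := by
  have := hg.cell_lt hk
  have := hk.2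
  grind [contract, nv]

theorem forall_mem_cells_contract_lt (hg : g.IsValid) (hk : g.Contractible k) :
    ∀ e ∈ (g.contract k).cells, e.1 < (g.contract k).nv ∧ e.2 < (g.contract k).nv := by
  obtain ⟨h1, h2⟩ := hg.cell_lt hk
  rw [cells_contract hk, nv_contract hg hk]
  intro e he
  obtain ⟨q, hq, rfl⟩ := List.mem_map.1 he
  have hq := (isValid_iff.1 hg).1 q (List.mem_of_mem_eraseIdx hq)
  exact ⟨mergeMap_lt hk.1 h1 h2 hq.1, mergeMap_lt hk.1 h1 h2 hq.2⟩

theorem endCount_min_mergeEdge {p : ℕ × ℕ} (hp : p.1 ≠ p.2) (e : ℕ × ℕ) :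
    endCount (min p.1 p.2) (mergeEdge p e) = endCount p.1 e + endCount p.2 e := by
  have h (x : ℕ) : mergeMap p.1 p.2 x = min p.1 p.2 ↔ x = p.1 ∨ x = p.2 := by
    grind [mergeMap]
  simp only [endCount, mergeEdge, Prod.map, h]
  grind

theorem endCount_mergeEdge_of_ne {p : ℕ × ℕ} {v : ℕ} (hv : v ≠ min p.1 p.2)
    (e : ℕ × ℕ) : endCount v (mergeEdge p e) = endCount (skip (max p.1 p.2) v) e := by
  have h (x : ℕ) : mergeMap p.1 p.2 x = v ↔ x = skip (max p.1 p.2) v := by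
    grind [mergeMap, skip]
  simp only [endCount, mergeEdge, Prod.map, h]

theorem cellValence_eq_add (hk : g.Contractible k) (v : ℕ) :
    g.cellValence v = endCount v (g.cell k) + ((g.cells.eraseIdx k).map (endCount v)).sum := by
  rw [cellValence, ← ((cell_cons_eraseIdx_perm hk.lt_length).map _).sum_eq, List.map_cons,
    List.sum_cons]

theorem cellValence_contract_min (hk : g.Contractible k) :
    (g.contract k).cellValence (min (g.cell k).1 (g.cell k).2) + 2 =
      g.cellValence (g.cell k).1 + g.cellValence (g.cell k).2 := by
  have hfst : endCount (g.cell k).1 (g.cell k) = 1 := by simp [endCount, hk.1.symm]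
  have hsnd : endCount (g.cell k).2 (g.cell k) = 1 := by simp [endCount, hk.1]
  rw [cellValence_eq_add hk, cellValence_eq_add hk, hfst, hsnd, cellValence, cells_contract hk,
    List.map_map]
  simp only [Function.comp_def, endCount_min_mergeEdge hk.1, List.sum_map_add]
  ring

theorem cellValence_contract_of_ne (hk : g.Contractible k) {v : ℕ}
    (hv : v ≠ min (g.cell k).1 (g.cell k).2) : (g.contract k).cellValence v =
      g.cellValence (skip (max (g.cell k).1 (g.cell k).2) v) := by
  have hzero : endCount (skip (max (g.cell k).1 (g.cell k).2) v) (g.cell k) = 0 := by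
    grind [endCount, skip]
  rw [cellValence_eq_add hk, hzero, zero_add, cellValence, cells_contract hk, List.map_map]
  simp only [Function.comp_def, endCount_mergeEdge_of_ne hv]

theorem three_le_cellValence_contract (hg : g.IsValid) (hk : g.Contractible k) {v : ℕ}
    (hv : v < (g.contract k).nv) : 3 ≤ (g.contract k).cellValence v := by
  have hval := (isValid_iff.1 hg).2.1
  obtain ⟨h1, h2⟩ := hg.cell_lt hk
  rw [nv_contract hg hk] at hv
  by_cases h : v = min (g.cell k).1 (g.cell k).2
  · have hsum := cellValence_contract_min hk
    have hfst := hval _ h1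
    have hsnd := hval _ h2
    rw [h]
    omega
  · rw [cellValence_contract_of_ne hk h]
    exact hval _ (by grind [skip])

theorem reflTransGen_adj_contract (hk : g.Contractible k) {a b : ℕ} (h : g.adj a b) :
    Relation.ReflTransGen (g.contract k).adj (mergeMap (g.cell k).1 (g.cell k).2 a)
      (mergeMap (g.cell k).1 (g.cell k).2 b) := by
  have key {e : ℕ × ℕ} (he : e ∈ g.cells) :
      Relation.ReflTransGen (g.contract k).adj (mergeEdge (g.cell k) e).1
        (mergeEdge (g.cell k) e).2 ∧
      Relation.ReflTransGen (g.contract k).adj (mergeEdge (g.cell k) e).2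
        (mergeEdge (g.cell k) e).1 := by
    rcases List.mem_cons.1 ((cell_cons_eraseIdx_perm hk.lt_length).mem_iff.2 he) with rfl | he
    · have hloop : (mergeEdge (g.cell k) (g.cell k)).1 = (mergeEdge (g.cell k) (g.cell k)).2 := by
        simp only [mergeEdge, Prod.map, mergeMap, true_or, or_true, if_true]
      exact hloop ▸ ⟨.refl, .refl⟩
    · have hadj : (g.contract k).adj (mergeEdge (g.cell k) e).1 (mergeEdge (g.cell k) e).2 :=
        adj_of_mem_cells (cells_contract hk ▸ List.mem_map_of_mem he)
      exact ⟨.single hadj, .single (adj_symm hadj)⟩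
  rcases h with ⟨e, he, ⟨rfl, rfl⟩ | ⟨rfl, rfl⟩⟩ | ⟨ha, hb⟩
  · exact (key (List.mem_append_right _ he)).1
  · exact (key (List.mem_append_right _ he)).2
  · exact .single (Or.inr ⟨(mergeMap_lt_contract_ve_iff hk a).2 (Or.inl ha),
      (mergeMap_lt_contract_ve_iff hk b).2 (Or.inl hb)⟩)

theorem connected_contract (hg : g.IsValid) (hk : g.Contractible k) : (g.contract k).Connected := by
  have hinv := (isLeastSection_mergeMap hk.1).leftInverse
  have hskip {v : ℕ} (hv : v < (g.contract k).nv) :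
      skip (max (g.cell k).1 (g.cell k).2) v < g.nv := by
    rw [nv_contract hg hk] at hv
    grind [skip]
  intro a b ha hb
  rw [← hinv a, ← hinv b]
  exact (hg.2.2.2 _ _ (hskip ha) (hskip hb)).lift' (mergeMap _ _)
    fun _ _ h => reflTransGen_adj_contract hk h

theorem isValid_contract (hg : g.IsValid) (hk : g.Contractible k) : (g.contract k).IsValid :=
  isValid_iff.2 ⟨forall_mem_cells_contract_lt hg hk, fun _ => three_le_cellValence_contract hg hk,
    connected_contract hg hk⟩

theorem ends_eq_iff {p q : ℕ × ℕ} : ends p = ends q ↔ p = q ∨ p = q.swap := Sym2.mk_eq_mk_iff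

theorem ve_add_lt_length_cells (a : Fin g.edges.length) : g.ve + a < g.cells.length :=
  length_cells g ▸ Nat.add_lt_add_left a.2 _

theorem exists_ve_add_eq {a : ℕ} (hve : g.ve ≤ a) (ha : a < g.cells.length) :
    ∃ i : Fin g.edges.length, g.ve + i = a := by
  rw [length_cells] at ha
  exact ⟨⟨a - g.ve, by omega⟩, Nat.add_sub_of_le hve⟩

theorem hasDoubleEdge_iff : g.hasDoubleEdge ↔ ∃ a b, a ≠ b ∧ (g.ve ≤ a ∧ a < g.cells.length) ∧
    (g.ve ≤ b ∧ b < g.cells.length) ∧ ends (g.cell b) = ends (g.cell a) := by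
  constructor
  · rintro ⟨a, b, hab, h⟩
    refine ⟨g.ve + a, g.ve + b, by omega, ⟨Nat.le_add_right _ _, ve_add_lt_length_cells a⟩,
      ⟨Nat.le_add_right _ _, ve_add_lt_length_cells b⟩, ?_⟩
    rwa [cell_ve_add, cell_ve_add, ends_eq_iff]
  · rintro ⟨a, b, hab, ha, hb, h⟩
    obtain ⟨i, rfl⟩ := exists_ve_add_eq ha.1 ha.2
    obtain ⟨j, rfl⟩ := exists_ve_add_eq hb.1 hb.2
    rw [cell_ve_add, cell_ve_add, ends_eq_iff] at h
    exact ⟨i, j, by rintro rfl; exact hab rfl, h⟩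

theorem hasInternalLoop_iff : g.hasInternalLoop ↔ ∃ a, (g.ve ≤ a ∧ a < g.cells.length) ∧
    (g.cell a).1 = (g.cell a).2 ∧ g.ve ≤ (g.cell a).1 := by
  constructor
  · rintro ⟨e, he, hloop⟩
    obtain ⟨i, rfl⟩ := List.mem_iff_get.1 he
    refine ⟨g.ve + i, ⟨Nat.le_add_right _ _, ve_add_lt_length_cells i⟩, ?_⟩
    rwa [cell_ve_add]
  · rintro ⟨a, ha, hloop⟩
    obtain ⟨i, rfl⟩ := exists_ve_add_eq ha.1 ha.2
    rw [cell_ve_add] at hloop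
    exact ⟨_, List.get_mem _ _, hloop⟩

theorem not_hasInternalLoop_contract (hg : g.IsAdmissible) (hk : g.Contractible k) :
    ¬(g.contract k).hasInternalLoop := by
  rw [hasInternalLoop_iff]
  rintro ⟨b, ⟨hbve, hb⟩, hloop, hint⟩
  have hve : g.ve ≤ skip k b := by rwa [← not_lt, ← lt_contract_ve_iff, not_lt]
  have hlt : skip k b < g.cells.length := by
    rw [length_cells_contract hk] at hb
    grind [skip]
  rw [cell_contract hk, mergeEdge, Prod.map_fst] at hloop hint
  rw [← not_lt, mergeMap_lt_contract_ve_iff hk] at hint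
  rw [Prod.map_snd, mergeMap_eq_iff hk.1] at hloop
  rcases hloop with hloop | hpar
  · exact hg.2.2 (hasInternalLoop_iff.2 ⟨_, ⟨hve, hlt⟩, hloop, by omega⟩)
  · have hkve : g.ve ≤ k := by
      by_contra h
      have := cell_lt_ve (not_le.1 h)
      omega
    refine hg.2.1 (hasDoubleEdge_iff.2 ⟨k, _, ?_, ⟨hkve, hk.lt_length⟩, ⟨hve, hlt⟩, ?_⟩)
    · grind [skip]
    · rwa [ends, ends, Sym2.eq_iff]

end Validity

section MergePerm

theorem mergeMap_apply_skip (σ : Equiv.Perm ℕ) {i j : ℕ} (hij : i ≠ j) (x : ℕ) :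
    mergeMap (σ i) (σ j) (σ (skip (max i j) (mergeMap i j x))) = mergeMap (σ i) (σ j) (σ x) := by
  rw [mergeMap_eq_iff (σ.injective.ne hij)]
  simp only [σ.apply_eq_iff_eq]
  exact (mergeMap_eq_iff hij _ _).1 ((isLeastSection_mergeMap hij).leftInverse _)

/-- The permutation of the labels induced by `σ` after the vertices `i` and `j` have been merged in
the source, and their images in the target. -/
def mergePerm (σ : Equiv.Perm ℕ) {i j : ℕ} (hij : i ≠ j) : Equiv.Perm ℕ where
  toFun y := mergeMap (σ i) (σ j) (σ (skip (max i j) y))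
  invFun z := mergeMap i j (σ.symm (skip (max (σ i) (σ j)) z))
  left_inv y := by
    have h := mergeMap_apply_skip σ.symm (σ.injective.ne hij) (σ (skip (max i j) y))
    simp only [Equiv.symm_apply_apply] at h
    exact h.trans ((isLeastSection_mergeMap hij).leftInverse y)
  right_inv z := by
    have h := mergeMap_apply_skip σ hij (σ.symm (skip (max (σ i) (σ j)) z))
    rw [Equiv.apply_symm_apply] at h
    exact h.trans ((isLeastSection_mergeMap (σ.injective.ne hij)).leftInverse z)

theorem mergePerm_mergeMap (σ : Equiv.Perm ℕ) {i j : ℕ} (hij : i ≠ j) (x : ℕ) :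
    mergePerm σ hij (mergeMap i j x) = mergeMap (σ i) (σ j) (σ x) :=
  mergeMap_apply_skip σ hij x

theorem mergeMap_eq_of_ends_eq {p q : ℕ × ℕ} (h : ends p = ends q) :
    mergeMap p.1 p.2 = mergeMap q.1 q.2 := by
  rcases ends_eq_iff.1 h with rfl | rfl
  · rfl
  · exact mergeMap_symm _ _

end MergePerm

theorem map_ends {p q : ℕ × ℕ} {f : ℕ → ℕ} (h : ends p = ends q) :
    ends (p.map f f) = ends (q.map f f) :=
  congrArg (Sym2.map f) h

theorem endCount_eq_of_ends_eq {p q : ℕ × ℕ} (h : ends p = ends q) (v : ℕ) :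
    endCount v p = endCount v q := by
  rcases ends_eq_iff.1 h with rfl | rfl
  · rfl
  · exact add_comm _ _

theorem cellValence_eq_sum {g : EvenGraph} {n : ℕ} (h : g.cells.length = n) (v : ℕ) :
    g.cellValence v = ∑ a : Fin n, endCount v (g.cell a) := by
  subst h
  rw [cellValence, ← Fin.sum_univ_fun_getElem]
  exact Finset.sum_congr rfl fun a _ => by rw [cell, List.getD_eq_getElem _ _ a.2]

/-- `σ` and `ρ` carry the vertices and the cells of `g` to those of `g'`, preserving the circle and
its orientation.  The permutation `ρ` is one of all the `n` cells, arcs included, so that its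
sign is the sign `(-1) ^ (π + l)` of the change of decoration. -/
structure IsIso (g g' : EvenGraph) {n : ℕ} (σ : Equiv.Perm ℕ) (ρ : Equiv.Perm (Fin n)) :
    Prop where
  ve_eq : g'.ve = g.ve
  vi_eq : g'.vi = g.vi
  length_eq : g.cells.length = n
  length_eq' : g'.cells.length = n
  apply_eq_self : ∀ v, g.nv ≤ v → σ v = v
  apply_lt_ve_iff : ∀ v, σ v < g.ve ↔ v < g.ve
  cell_lt_ve_iff : ∀ a, (ρ a : ℕ) < g.ve ↔ (a : ℕ) < g.ve
  cell_arc : ∀ a : Fin n, (a : ℕ) < g.ve → g'.cell (ρ a) = (g.cell a).map σ σ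
  ends_cell : ∀ a : Fin n, ends (g'.cell (ρ a)) = ends ((g.cell a).map σ σ)

namespace IsIso

variable {g g' : EvenGraph} {n : ℕ} {σ : Equiv.Perm ℕ} {ρ : Equiv.Perm (Fin n)}

theorem nv_eq (h : IsIso g g' σ ρ) : g'.nv = g.nv := by
  rw [nv, nv, h.ve_eq, h.vi_eq]

theorem apply_lt_nv_iff (h : IsIso g g' σ ρ) (v : ℕ) : σ v < g.nv ↔ v < g.nv := by
  rw [← not_le, ← not_le, not_iff_not]
  refine ⟨fun hv => ?_, fun hv => (h.apply_eq_self v hv).symm ▸ hv⟩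
  rwa [σ.injective (h.apply_eq_self _ hv)] at hv

theorem symm (h : IsIso g g' σ ρ) : IsIso g' g σ.symm ρ.symm where
  ve_eq := h.ve_eq.symm
  vi_eq := h.vi_eq.symm
  length_eq := h.length_eq'
  length_eq' := h.length_eq
  apply_eq_self v hv := by
    rw [Equiv.symm_apply_eq, h.apply_eq_self v (h.nv_eq ▸ hv)]
  apply_lt_ve_iff v := by
    rw [h.ve_eq, ← h.apply_lt_ve_iff, Equiv.apply_symm_apply]
  cell_lt_ve_iff a := by
    rw [h.ve_eq, ← h.cell_lt_ve_iff, Equiv.apply_symm_apply]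
  cell_arc a ha := by
    have ha' : ((ρ.symm a : Fin n) : ℕ) < g.ve := by
      rwa [← h.cell_lt_ve_iff, Equiv.apply_symm_apply, ← h.ve_eq]
    have := h.cell_arc _ ha'
    rw [Equiv.apply_symm_apply] at this
    rw [this, Prod.map_map, σ.symm_comp_self, Prod.map_id, id]
  ends_cell a := by
    have := map_ends (f := σ.symm) (h.ends_cell (ρ.symm a))
    rwa [Equiv.apply_symm_apply, Prod.map_map, σ.symm_comp_self, Prod.map_id, id, eq_comm] at this

theorem exists_cell_eq (h : IsIso g g' σ ρ) {e : ℕ × ℕ} (he : e ∈ g'.cells) :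
    ∃ a : Fin n, g'.cell (ρ a) = e := by
  obtain ⟨i, hi, rfl⟩ := List.getElem_of_mem he
  refine ⟨ρ.symm ⟨i, h.length_eq' ▸ hi⟩, ?_⟩
  rw [Equiv.apply_symm_apply, cell, List.getD_eq_getElem _ _ hi]

theorem forall_mem_cells_lt (h : IsIso g g' σ ρ) (hg : ∀ e ∈ g.cells, e.1 < g.nv ∧ e.2 < g.nv) :
    ∀ e ∈ g'.cells, e.1 < g'.nv ∧ e.2 < g'.nv := by
  intro e he
  obtain ⟨a, rfl⟩ := h.exists_cell_eq he
  have ha : σ (g.cell a).1 < g'.nv ∧ σ (g.cell a).2 < g'.nv := by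
    rw [h.nv_eq, h.apply_lt_nv_iff, h.apply_lt_nv_iff]
    exact hg _ (cell_mem (a.2.trans_eq h.length_eq.symm))
  rcases ends_eq_iff.1 (h.ends_cell a) with he | he <;> rw [he]
  exacts [ha, ha.symm]

theorem cellValence_apply (h : IsIso g g' σ ρ) (v : ℕ) :
    g'.cellValence (σ v) = g.cellValence v := by
  rw [cellValence_eq_sum h.length_eq, cellValence_eq_sum h.length_eq', ← Equiv.sum_comp ρ]
  refine Finset.sum_congr rfl fun a _ => ?_
  rw [endCount_eq_of_ends_eq (h.ends_cell a)]
  simp only [endCount, Prod.map, σ.apply_eq_iff_eq]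

theorem adj_apply (h : IsIso g g' σ ρ) {a b : ℕ} (hab : g.adj a b) : g'.adj (σ a) (σ b) := by
  rcases hab with ⟨e, he, hab⟩ | ⟨ha, hb⟩
  · obtain ⟨i, hi⟩ := h.symm.exists_cell_eq (List.mem_append_right _ he)
    have hends := h.ends_cell (ρ.symm i)
    have hadj := adj_of_mem_cells (cell_mem ((ρ (ρ.symm i)).2.trans_eq h.length_eq'.symm))
    rw [hi, ends_eq_iff] at hends
    rcases hab with ⟨rfl, rfl⟩ | ⟨rfl, rfl⟩ <;> rcases hends with hends | hends <;>
      rw [hends] at hadj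
    exacts [hadj, adj_symm hadj, adj_symm hadj, hadj]
  · exact Or.inr ⟨h.ve_eq ▸ (h.apply_lt_ve_iff a).2 ha, h.ve_eq ▸ (h.apply_lt_ve_iff b).2 hb⟩

theorem isValid (h : IsIso g g' σ ρ) (hg : g.IsValid) : g'.IsValid := by
  obtain ⟨hlt, hval, hconn⟩ := isValid_iff.1 hg
  have hsymm {v : ℕ} (hv : v < g'.nv) : σ.symm v < g.nv := by
    rwa [← h.apply_lt_nv_iff, Equiv.apply_symm_apply, ← h.nv_eq]
  refine isValid_iff.2 ⟨h.forall_mem_cells_lt hlt, fun v hv => ?_, fun a b ha hb => ?_⟩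
  · rw [← σ.apply_symm_apply v, h.cellValence_apply]
    exact hval _ (hsymm hv)
  · rw [← σ.apply_symm_apply a, ← σ.apply_symm_apply b]
    exact (hconn _ _ (hsymm ha) (hsymm hb)).lift σ fun _ _ => h.adj_apply

theorem hasDoubleEdge (h : IsIso g g' σ ρ) (hg : g.hasDoubleEdge) : g'.hasDoubleEdge := by
  obtain ⟨a, b, hab, ha, hb, hends⟩ := hasDoubleEdge_iff.1 hg
  rw [h.length_eq] at ha hb
  have hmem (c : Fin n) (hc : g.ve ≤ c) : g'.ve ≤ ρ c ∧ (ρ c : ℕ) < g'.cells.length := by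
    rw [h.ve_eq, h.length_eq', ← not_lt, h.cell_lt_ve_iff, not_lt]
    exact ⟨hc, (ρ c).2⟩
  refine hasDoubleEdge_iff.2 ⟨ρ ⟨a, ha.2⟩, ρ ⟨b, hb.2⟩, ?_, hmem _ ha.1, hmem _ hb.1, ?_⟩
  · rwa [Ne, Fin.val_inj, ρ.apply_eq_iff_eq, Fin.mk.injEq]
  · rw [h.ends_cell, h.ends_cell]
    exact map_ends hends

theorem hasInternalLoop (h : IsIso g g' σ ρ) (hg : g.hasInternalLoop) : g'.hasInternalLoop := by
  obtain ⟨a, ha, hloop, hint⟩ := hasInternalLoop_iff.1 hg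
  rw [h.length_eq] at ha
  refine hasInternalLoop_iff.2 ⟨ρ ⟨a, ha.2⟩, ⟨?_, h.length_eq'.symm ▸ (ρ _).2⟩, ?_⟩
  · rw [h.ve_eq, ← not_lt, h.cell_lt_ve_iff]
    exact ha.1.not_gt
  · rw [← not_lt, ← h.apply_lt_ve_iff, not_lt, ← h.ve_eq] at hint
    rcases ends_eq_iff.1 (h.ends_cell ⟨a, ha.2⟩) with he | he <;> rw [he]
    · exact ⟨congrArg σ hloop, hint⟩
    · exact ⟨congrArg σ hloop.symm, hint.trans_eq (congrArg σ hloop)⟩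

theorem isAdmissible_iff (h : IsIso g g' σ ρ) : g.IsAdmissible ↔ g'.IsAdmissible :=
  and_congr ⟨h.isValid, h.symm.isValid⟩ (and_congr
    (not_congr ⟨h.hasDoubleEdge, h.symm.hasDoubleEdge⟩)
    (not_congr ⟨h.hasInternalLoop, h.symm.hasInternalLoop⟩))

theorem contractible_apply_iff (h : IsIso g g' σ ρ) (k : Fin n) :
    g'.Contractible (ρ k) ↔ g.Contractible k := by
  have hlt (v : ℕ) : σ v < g'.ve ↔ v < g.ve := h.ve_eq ▸ h.apply_lt_ve_iff v
  have hk : (ρ k : ℕ) < g'.ve ↔ (k : ℕ) < g.ve := h.ve_eq ▸ h.cell_lt_ve_iff k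
  rcases ends_eq_iff.1 (h.ends_cell k) with he | he <;>
    simp only [Contractible, he, Prod.map, Prod.swap, hlt, hk, ne_eq, σ.apply_eq_iff_eq]
  rw [eq_comm, and_comm (a := (g.cell k).2 < g.ve)]

end IsIso

theorem mergeEdge_map {σ : Equiv.Perm ℕ} {p p' : ℕ × ℕ} (hp : p.1 ≠ p.2)
    (hp' : ends p' = ends (p.map σ σ)) (q : ℕ × ℕ) :
    mergeEdge p' (q.map σ σ) = (mergeEdge p q).map (mergePerm σ hp) (mergePerm σ hp) := by
  rw [mergeEdge, mergeMap_eq_of_ends_eq hp']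
  exact Prod.ext (mergePerm_mergeMap σ hp q.1).symm (mergePerm_mergeMap σ hp q.2).symm

namespace IsIso

variable {n : ℕ} {g g' : EvenGraph} {σ : Equiv.Perm ℕ} {ρ : Equiv.Perm (Fin (n + 1))}
  {k : Fin (n + 1)} {ρ' : Equiv.Perm (Fin n)}

theorem contract_ve_eq (h : IsIso g g' σ ρ) (k : Fin (n + 1)) :
    (g'.contract (ρ k)).ve = (g.contract k).ve := by
  simp only [EvenGraph.contract, h.ve_eq, h.cell_lt_ve_iff]

theorem mergePerm_eq_self (h : IsIso g g' σ ρ) (hg : g.IsValid) (hk : g.Contractible k) {v : ℕ}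
    (hv : (g.contract k).nv ≤ v) : mergePerm σ hk.1 v = v := by
  obtain ⟨h1, h2⟩ := hg.cell_lt hk
  rw [nv_contract hg hk] at hv
  have h1' := (h.apply_lt_nv_iff _).2 h1
  have h2' := (h.apply_lt_nv_iff _).2 h2
  have hskip : skip (max (g.cell k).1 (g.cell k).2) v = v + 1 := skip_of_le (by omega)
  change mergeMap _ _ (σ (skip _ v)) = v
  rw [hskip, h.apply_eq_self (v + 1) (by omega)]
  grind [mergeMap]

theorem mergePerm_lt_ve_iff (h : IsIso g g' σ ρ) (hk : g.Contractible k) (v : ℕ) :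
    mergePerm σ hk.1 v < (g.contract k).ve ↔ v < (g.contract k).ve := by
  obtain ⟨x, rfl⟩ := (isLeastSection_mergeMap hk.1).leftInverse.surjective v
  have hlt (v : ℕ) : σ v < g'.ve ↔ v < g.ve := h.ve_eq ▸ h.apply_lt_ve_iff v
  rw [mergePerm_mergeMap, mergeMap_lt_contract_ve_iff hk, ← h.contract_ve_eq]
  change mergeMap ((g.cell k).map σ σ).1 ((g.cell k).map σ σ).2 (σ x) < _ ↔ _
  rw [← mergeMap_eq_of_ends_eq (h.ends_cell k),
    mergeMap_lt_contract_ve_iff ((h.contractible_apply_iff k).2 hk)]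
  rcases ends_eq_iff.1 (h.ends_cell k) with he | he <;>
    simp only [he, Prod.map, Prod.swap, hlt, σ.apply_eq_iff_eq]
  rw [or_comm (a := x = (g.cell k).2), or_comm (a := (g.cell k).2 < g.ve)]

theorem contract (h : IsIso g g' σ ρ) (hg : g.IsValid) (hk : g.Contractible k)
    (hρ : ∀ b, ρ (k.succAbove b) = (ρ k).succAbove (ρ' b)) :
    IsIso (g.contract k) (g'.contract (ρ k)) (mergePerm σ hk.1) ρ' := by
  have hk' := (h.contractible_apply_iff k).2 hk
  have hskip (b : Fin n) : skip (ρ k) (ρ' b) = ρ (k.succAbove b) := by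
    rw [← coe_succAbove, hρ]
  have hlt (b : Fin n) : (b : ℕ) < (g.contract k).ve ↔ (k.succAbove b : ℕ) < g.ve := by
    rw [lt_contract_ve_iff, coe_succAbove]
  exact
  { ve_eq := h.contract_ve_eq k
    vi_eq := by simp only [EvenGraph.contract, h.ve_eq, h.vi_eq, h.cell_lt_ve_iff]
    length_eq := by rw [length_cells_contract hk, h.length_eq, Nat.add_sub_cancel]
    length_eq' := by rw [length_cells_contract hk', h.length_eq', Nat.add_sub_cancel]
    apply_eq_self := fun v => h.mergePerm_eq_self hg hk
    apply_lt_ve_iff := h.mergePerm_lt_ve_iff hk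
    cell_lt_ve_iff := fun a => by
      rw [← h.contract_ve_eq, lt_contract_ve_iff, hskip, h.contract_ve_eq, hlt, h.ve_eq,
        h.cell_lt_ve_iff]
    cell_arc := fun a ha => by
      rw [cell_contract hk, cell_contract hk', hskip, ← coe_succAbove,
        h.cell_arc _ ((hlt a).1 ha), mergeEdge_map hk.1 (h.ends_cell k)]
    ends_cell := fun a => by
      rw [cell_contract hk, cell_contract hk', hskip, ← coe_succAbove,
        ← mergeEdge_map hk.1 (h.ends_cell k)]
      exact map_ends (h.ends_cell (k.succAbove a)) }

end IsIso

section Relabelling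

theorem coe_finRotate_pow {n : ℕ} (r : ℕ) (i : Fin n) :
    ((finRotate n ^ r) i : ℕ) = (i + r) % n := by
  induction r with
  | zero => exact (Nat.mod_eq_of_lt i.2).symm
  | succ r ih =>
    have := i.neZero
    rw [pow_succ', Equiv.Perm.mul_apply, finRotate_apply, Fin.val_add, ih, Fin.val_one',
      ← Nat.add_mod, add_assoc]

/-- The permutation of the cells induced by permutations of the arcs and of the edges. -/
def cellPerm {v e : ℕ} (α : Equiv.Perm (Fin v)) (τ : Equiv.Perm (Fin e)) :
    Equiv.Perm (Fin (v + e)) :=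
  finSumFinEquiv.permCongr (Equiv.Perm.sumCongr α τ)

theorem sign_cellPerm {v e : ℕ} (α : Equiv.Perm (Fin v)) (τ : Equiv.Perm (Fin e)) :
    Equiv.Perm.sign (cellPerm α τ) = Equiv.Perm.sign α * Equiv.Perm.sign τ := by
  rw [cellPerm, Equiv.Perm.sign_permCongr, Equiv.Perm.sign_sumCongr]

theorem cellPerm_castAdd {v e : ℕ} (α : Equiv.Perm (Fin v)) (τ : Equiv.Perm (Fin e)) (i : Fin v) :
    cellPerm α τ (Fin.castAdd e i) = Fin.castAdd e (α i) := by
  rw [cellPerm, Equiv.permCongr_apply, finSumFinEquiv_symm_apply_castAdd]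
  rfl

theorem cellPerm_natAdd {v e : ℕ} (α : Equiv.Perm (Fin v)) (τ : Equiv.Perm (Fin e)) (a : Fin e) :
    cellPerm α τ (Fin.natAdd v a) = Fin.natAdd v (τ a) := by
  rw [cellPerm, Equiv.permCongr_apply, finSumFinEquiv_symm_apply_natAdd]
  rfl

theorem exists_cellPerm_eq {v e : ℕ} (ρ : Equiv.Perm (Fin (v + e)))
    (h : ∀ a, (ρ a : ℕ) < v ↔ (a : ℕ) < v) : ∃ α τ, cellPerm α τ = ρ := by
  have hmaps : Set.MapsTo (finSumFinEquiv.symm.permCongr ρ)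
      (Set.range Sum.inl) (Set.range (Sum.inl : Fin v → Fin v ⊕ Fin e)) := by
    rintro _ ⟨i, rfl⟩
    refine ⟨⟨ρ (Fin.castAdd e i), (h _).2 i.2⟩, ?_⟩
    rw [Equiv.permCongr_apply, Equiv.eq_symm_apply, Equiv.symm_symm, finSumFinEquiv_apply_left,
      finSumFinEquiv_apply_left]
    rfl
  obtain ⟨⟨α, τ⟩, hατ⟩ := Equiv.Perm.mem_sumCongrHom_range_of_perm_mapsTo_inl hmaps
  refine ⟨α, τ, ?_⟩
  exact (congrArg finSumFinEquiv.permCongr hατ).trans (finSumFinEquiv.permCongr.apply_symm_apply ρ)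

variable {ve vi : ℕ}

theorem permVertexE_of_lt (π : Equiv.Perm (Fin vi)) (r : ℕ) {v : ℕ} (hv : v < ve) :
    permVertexE ve vi π r v = (v + r) % ve := if_pos hv

theorem permVertexE_ve_add (π : Equiv.Perm (Fin vi)) (r : ℕ) (x : Fin vi) :
    permVertexE ve vi π r (ve + x) = ve + π x := by
  simp only [permVertexE, Nat.not_lt.2 (Nat.le_add_right ve x), if_false,
    Nat.add_sub_cancel_left, x.2, dif_pos, Fin.eta]

theorem permVertexE_of_le (π : Equiv.Perm (Fin vi)) (r : ℕ) {v : ℕ} (hv : ve + vi ≤ v) :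
    permVertexE ve vi π r v = v := by
  rw [permVertexE, if_neg (by omega), dif_neg (by omega)]

theorem vertex_cases (ve vi v : ℕ) :
    v < ve ∨ (∃ x : Fin vi, ve + x = v) ∨ ve + vi ≤ v := by
  by_cases h : ve ≤ v ∧ v < ve + vi
  · exact Or.inr (Or.inl ⟨⟨v - ve, by omega⟩, Nat.add_sub_of_le h.1⟩)
  · omega

theorem permVertexE_permVertexE (π π' : Equiv.Perm (Fin vi)) (r r' v : ℕ) :
    permVertexE ve vi π r (permVertexE ve vi π' r' v) = permVertexE ve vi (π * π') (r' + r) v := by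
  rcases vertex_cases ve vi v with hv | ⟨x, rfl⟩ | hv
  · rw [permVertexE_of_lt _ _ hv, permVertexE_of_lt _ _ hv,
      permVertexE_of_lt _ _ (Nat.mod_lt _ (by omega)), Nat.mod_add_mod, add_assoc]
  · simp only [permVertexE_ve_add, Equiv.Perm.mul_apply]
  · simp only [permVertexE_of_le _ _ hv]

theorem permVertexE_one (r v : ℕ) : permVertexE ve vi 1 ((ve - 1) * r + r) v = v := by
  rcases vertex_cases ve vi v with hv | ⟨x, rfl⟩ | hv
  · rw [permVertexE_of_lt _ _ hv, ← Nat.succ_mul, Nat.succ_eq_add_one,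
      Nat.sub_add_cancel (by omega), Nat.add_mul_mod_self_left, Nat.mod_eq_of_lt hv]
  · rw [permVertexE_ve_add, Equiv.Perm.one_apply]
  · exact permVertexE_of_le _ _ hv

theorem permVertexE_lt_ve_iff (π : Equiv.Perm (Fin vi)) (r v : ℕ) :
    permVertexE ve vi π r v < ve ↔ v < ve := by
  rcases vertex_cases ve vi v with hv | ⟨x, rfl⟩ | hv
  · rw [permVertexE_of_lt _ _ hv]
    exact iff_of_true (Nat.mod_lt _ (by omega)) hv
  · rw [permVertexE_ve_add]
    omega
  · rw [permVertexE_of_le _ _ hv]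

theorem permVertexE_arc (π : Equiv.Perm (Fin vi)) (r : ℕ) {i : ℕ} (hi : i < ve) :
    (arc ve i).map (permVertexE ve vi π r) (permVertexE ve vi π r) = arc ve ((i + r) % ve) := by
  refine Prod.ext (permVertexE_of_lt π r hi) ?_
  refine (permVertexE_of_lt π r (Nat.mod_lt _ (by omega))).trans ?_
  simp only [arc, Nat.mod_add_mod, add_right_comm]

/-- The function `permVertexE`, as a permutation of the labels. -/
def vertexPerm (ve vi : ℕ) (π : Equiv.Perm (Fin vi)) (r : ℕ) : Equiv.Perm ℕ where
  toFun := permVertexE ve vi π r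
  invFun := permVertexE ve vi π⁻¹ ((ve - 1) * r)
  left_inv v := by rw [permVertexE_permVertexE, inv_mul_cancel, add_comm, permVertexE_one]
  right_inv v := by rw [permVertexE_permVertexE, mul_inv_cancel, permVertexE_one]

theorem ends_eq_iff_exists_bool {p q : ℕ × ℕ} :
    ends p = ends q ↔ ∃ s : Bool, p = if s then (q.2, q.1) else q := by
  rw [ends_eq_iff, Bool.exists_bool]
  rfl

variable {g g' : EvenGraph}

theorem cell_ve_add_of_eq {n : ℕ} (hve : g.ve = ve) (h : g.edges.length = n) (a : Fin n) :
    g.cell (ve + a) = g.edges.get (Fin.cast h.symm a) := by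
  subst hve
  exact cell_ve_add (Fin.cast h.symm a)

theorem exists_isIso_of_evenRel {ε : ℝ} (h : EvenRel g g' ε) :
    ∃ (σ : Equiv.Perm ℕ) (ρ : Equiv.Perm (Fin (g.ve + g.edges.length))),
      IsIso g g' σ ρ ∧ ε = ((Equiv.Perm.sign ρ : ℤ) : ℝ) := by
  obtain ⟨hve, hvi, π, r, hlen, τ, sw, hsw, rfl⟩ := h
  have harc (i : Fin g.ve) : g'.cell ((finRotate g.ve ^ r) i) =
      (g.cell i).map (permVertexE g.ve g.vi π r) (permVertexE g.ve g.vi π r) := by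
    rw [cell_of_lt_ve i.2, permVertexE_arc π r i.2,
      cell_of_lt_ve (Nat.lt_of_lt_of_eq (Fin.is_lt _) hve.symm), hve, coe_finRotate_pow]
  have hedge (a : Fin g.edges.length) : ends (g'.cell (g.ve + τ a)) =
      ends ((g.cell (g.ve + a)).map (permVertexE g.ve g.vi π r) (permVertexE g.ve g.vi π r)) := by
    rw [cell_ve_add, cell_ve_add_of_eq hve hlen]
    exact ends_eq_iff_exists_bool.2 ⟨sw a, hsw a⟩
  refine ⟨vertexPerm g.ve g.vi π r, cellPerm (finRotate g.ve ^ r) τ,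
    { ve_eq := hve
      vi_eq := hvi
      length_eq := length_cells g
      length_eq' := by rw [length_cells, hve, hlen]
      apply_eq_self := fun v => permVertexE_of_le π r
      apply_lt_ve_iff := permVertexE_lt_ve_iff π r
      cell_lt_ve_iff := ?_
      cell_arc := ?_
      ends_cell := ?_ }, ?_⟩
  · refine Fin.addCases (fun i => ?_) fun a => ?_
    · rw [cellPerm_castAdd]
      exact iff_of_true (Fin.is_lt ((finRotate g.ve ^ r) i)) i.2
    · rw [cellPerm_natAdd, Fin.val_natAdd, Fin.val_natAdd]
      omega
  · refine Fin.addCases (fun i _ => ?_) fun a ha => absurd ha (Nat.not_lt.2 (Nat.le_add_right _ _))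
    rw [cellPerm_castAdd]
    exact harc i
  · refine Fin.addCases (fun i => ?_) fun a => ?_
    · rw [cellPerm_castAdd]
      exact congrArg ends (harc i)
    · rw [cellPerm_natAdd]
      exact hedge a
  · rw [sign_cellPerm, Units.val_mul, Int.cast_mul]

namespace IsIso

variable {n : ℕ} {σ : Equiv.Perm ℕ} {ρ : Equiv.Perm (Fin n)}

theorem apply_arc (h : IsIso g g' σ ρ) {a : Fin n} (ha : (a : ℕ) < g.ve) :
    (ρ a : ℕ) = σ a ∧ (σ a + 1) % g.ve = σ ((a + 1) % g.ve) := by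
  have harc := h.cell_arc a ha
  have hρ := (h.cell_lt_ve_iff a).2 ha
  rw [cell_of_lt_ve ha, cell_of_lt_ve (h.ve_eq ▸ hρ), h.ve_eq] at harc
  obtain ⟨h1, h2⟩ := Prod.mk.inj harc
  exact ⟨h1, h1 ▸ h2⟩

theorem apply_of_lt_ve (h : IsIso g g' σ ρ) {v : ℕ} (hv : v < g.ve) : σ v = (v + σ 0) % g.ve := by
  have hn : g.ve ≤ n := by
    rw [← h.length_eq, length_cells]
    exact Nat.le_add_right _ _
  induction v with
  | zero => rw [zero_add, Nat.mod_eq_of_lt ((h.apply_lt_ve_iff 0).2 hv)]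
  | succ v ih =>
    have hstep := (h.apply_arc (a := ⟨v, by omega⟩) (Nat.lt_of_succ_lt hv)).2
    rw [Nat.mod_eq_of_lt hv, ih (Nat.lt_of_succ_lt hv), Nat.mod_add_mod] at hstep
    rw [← hstep, add_right_comm]

theorem exists_permVertexE_eq (h : IsIso g g' σ ρ) :
    ∃ π, permVertexE g.ve g.vi π (σ 0) = σ := by
  have hint (x : Fin g.vi) : g.ve ≤ σ (g.ve + x) ∧ σ (g.ve + x) < g.ve + g.vi := by
    rw [← not_lt, h.apply_lt_ve_iff]
    exact ⟨by omega, (h.apply_lt_nv_iff _).2 (Nat.add_lt_add_left x.2 _)⟩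
  let π (x : Fin g.vi) : Fin g.vi := ⟨σ (g.ve + x) - g.ve, by have := hint x; omega⟩
  have hπ (x : Fin g.vi) : g.ve + (π x : ℕ) = σ (g.ve + x) := Nat.add_sub_of_le (hint x).1
  have hinj : Function.Injective π := fun x y hxy => by
    have := congrArg (fun z : Fin g.vi => g.ve + (z : ℕ)) hxy
    simp only [hπ, σ.apply_eq_iff_eq] at this
    omega
  refine ⟨Equiv.ofBijective π (Finite.injective_iff_bijective.1 hinj), funext fun v => ?_⟩
  rcases vertex_cases g.ve g.vi v with hv | ⟨x, rfl⟩ | hv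
  · rw [permVertexE_of_lt _ _ hv, h.apply_of_lt_ve hv]
  · rw [permVertexE_ve_add, Equiv.ofBijective_apply, hπ]
  · rw [permVertexE_of_le _ _ hv, h.apply_eq_self v hv]

theorem evenRel (h : IsIso g g' σ ρ) : EvenRel g g' ((Equiv.Perm.sign ρ : ℤ) : ℝ) := by
  obtain rfl : g.ve + g.edges.length = n := by rw [← h.length_eq, length_cells]
  have hlen : g'.edges.length = g.edges.length := by
    have := h.length_eq'
    rw [length_cells, h.ve_eq] at this
    omega
  obtain ⟨π, hπ⟩ := h.exists_permVertexE_eq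
  obtain ⟨α, τ, rfl⟩ := exists_cellPerm_eq ρ h.cell_lt_ve_iff
  have hα : α = finRotate g.ve ^ σ 0 := by
    refine Equiv.ext fun i => Fin.ext ?_
    have := (h.apply_arc (a := Fin.castAdd _ i) i.2).1
    rw [cellPerm_castAdd] at this
    rw [coe_finRotate_pow, ← h.apply_of_lt_ve i.2]
    exact this
  have hedge (a : Fin g.edges.length) := h.ends_cell (Fin.natAdd _ a)
  simp only [cellPerm_natAdd, Fin.val_natAdd, cell_ve_add, cell_ve_add_of_eq h.ve_eq hlen,
    ends_eq_iff_exists_bool] at hedge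
  rw [← hπ] at hedge
  choose sw hsw using hedge
  refine ⟨h.ve_eq, h.vi_eq, π, σ 0, hlen, τ, sw, hsw, ?_⟩
  rw [sign_cellPerm, Units.val_mul, Int.cast_mul, hα]

end IsIso

end Relabelling

section Operator

variable {g g' : EvenGraph}

theorem cls_eq_of_evenRel {ε : ℝ} (h : EvenRel g g' ε) : cls g = ε • cls g' := by
  rw [cls, cls, ← Submodule.Quotient.mk_smul, Submodule.Quotient.eq]
  exact Submodule.subset_span (Or.inr ⟨g, g', ε, h, rfl⟩)

theorem cobound_eq_sum {n : ℕ} (h : g.cells.length = n) : g.cobound =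
    ∑ k : Fin n, if g.Contractible k then (-1 : ℝ) ^ (k : ℕ) • cls (g.contract k) else 0 := by
  rw [cobound, h, Finset.sum_range]

theorem IsIso.cobound_eq {n : ℕ} {σ : Equiv.Perm ℕ} {ρ : Equiv.Perm (Fin n)}
    (h : IsIso g g' σ ρ) (hg : g.IsValid) :
    g.cobound = ((Equiv.Perm.sign ρ : ℤ) : ℝ) • g'.cobound := by
  rw [cobound_eq_sum h.length_eq, cobound_eq_sum h.length_eq', Finset.smul_sum,
    ← Equiv.sum_comp ρ fun k : Fin n => ((Equiv.Perm.sign ρ : ℤ) : ℝ) • ite (g'.Contractible k) _ _]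
  refine Finset.sum_congr rfl fun k _ => ?_
  cases n with
  | zero => exact k.elim0
  | succ n =>
    simp only [h.contractible_apply_iff k]
    split_ifs with hk
    · obtain ⟨ρ', hρ, hsign⟩ := exists_perm_succAbove ρ k
      have hreal : ((Equiv.Perm.sign ρ : ℤ) : ℝ) =
          (-1) ^ (k : ℕ) * (-1) ^ (ρ k : ℕ) * ((Equiv.Perm.sign ρ' : ℤ) : ℝ) := by
        rw [hsign, pow_add]
        push_cast
        rfl
      have hsq : (-1 : ℝ) ^ (ρ k : ℕ) * (-1) ^ (ρ k : ℕ) = 1 := by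
        rw [← pow_add, Even.neg_one_pow ⟨_, rfl⟩]
      rw [cls_eq_of_evenRel (h.contract hg hk hρ).evenRel, smul_smul, smul_smul, hreal]
      refine congrArg (· • _) ?_
      linear_combination -((-1) ^ (k : ℕ) * ((Equiv.Perm.sign ρ' : ℤ) : ℝ)) * hsq
    · rw [smul_zero]

theorem isIso_swap {a b : Fin g.cells.length} (ha : g.ve ≤ a) (hb : g.ve ≤ b)
    (h : ends (g.cell a) = ends (g.cell b)) : IsIso g g 1 (Equiv.swap a b) where
  ve_eq := rfl
  vi_eq := rfl
  length_eq := rfl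
  length_eq' := rfl
  apply_eq_self _ _ := rfl
  apply_lt_ve_iff _ := Iff.rfl
  cell_lt_ve_iff := by
    refine fun c => iff_of_eq (Equiv.apply_swap_eq_self
      (v := fun c : Fin g.cells.length => (c : ℕ) < g.ve) ?_ c)
    exact propext (iff_of_false ha.not_gt hb.not_gt)
  cell_arc c hc := by
    rw [Equiv.swap_apply_of_ne_of_ne (by rintro rfl; omega) (by rintro rfl; omega)]
    rfl
  ends_cell := Equiv.apply_swap_eq_self (v := fun c : Fin g.cells.length => ends (g.cell c)) h

theorem cobound_eq_zero (hg : g.IsValid) (hdouble : g.hasDoubleEdge) : g.cobound = 0 := by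
  obtain ⟨a, b, hab, ⟨hva, ha⟩, ⟨hvb, hb⟩, hends⟩ := hasDoubleEdge_iff.1 hdouble
  have hiso := isIso_swap (a := ⟨a, ha⟩) (b := ⟨b, hb⟩) hva hvb hends.symm
  have hneg := hiso.cobound_eq hg
  rw [Equiv.Perm.sign_swap (Fin.ne_of_val_ne hab), Units.val_neg, Units.val_one, Int.cast_neg,
    Int.cast_one, neg_one_smul] at hneg
  have htwo : (2 : ℝ) • g.cobound = 0 := by
    rw [two_smul]
    exact add_eq_zero_iff_eq_neg.2 hneg
  exact (smul_eq_zero.1 htwo).resolve_left two_ne_zero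

theorem mk_deltaGenE_of_isValid (hg : g.IsValid) (hloop : ¬g.hasInternalLoop) :
    Submodule.Quotient.mk (deltaGenE g) = g.cobound := by
  by_cases hdouble : g.hasDoubleEdge
  · rw [deltaGenE, if_neg fun h => h.2.1 hdouble, cobound_eq_zero hg hdouble,
      Submodule.Quotient.mk_zero]
  · exact mk_deltaGenE ⟨hg, hdouble, hloop⟩

theorem deltaGenE_eq_zero (hg : ¬g.IsAdmissible) : deltaGenE g = 0 := if_neg hg

theorem mk_deltaGenE_of_evenRel {ε : ℝ} (h : EvenRel g g' ε) :
    (Submodule.Quotient.mk (deltaGenE g) : De) = ε • Submodule.Quotient.mk (deltaGenE g') := by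
  obtain ⟨σ, ρ, hiso, rfl⟩ := exists_isIso_of_evenRel h
  by_cases hg : g.IsAdmissible
  · rw [mk_deltaGenE hg, mk_deltaGenE (hiso.isAdmissible_iff.1 hg), hiso.cobound_eq hg.1]
  · rw [deltaGenE_eq_zero hg, deltaGenE_eq_zero (hiso.isAdmissible_iff.not.1 hg),
      Submodule.Quotient.mk_zero, smul_zero]

theorem deltaFreeE_single (g : EvenGraph) : deltaFreeE (Finsupp.single g 1) = deltaGenE g := by
  rw [deltaFreeE, Finsupp.lsum_single, LinearMap.toSpanSingleton_apply, one_smul]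

theorem evenRelations_le_comap_deltaFreeE : evenRelations ≤ evenRelations.comap deltaFreeE := by
  have hzero {g : EvenGraph} (hg : ¬g.IsAdmissible) :
      Finsupp.single g 1 ∈ evenRelations.comap deltaFreeE := by
    rw [Submodule.mem_comap, deltaFreeE_single, deltaGenE_eq_zero hg]
    exact zero_mem _
  refine Submodule.span_le.2 ?_
  rintro _ (((⟨g, hg, rfl⟩ | ⟨g, hg, rfl⟩) | ⟨g, hg, rfl⟩) | ⟨g, g', ε, h, rfl⟩)
  · exact hzero fun h => hg h.1
  · exact hzero fun h => h.2.1 hg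
  · exact hzero fun h => h.2.2 hg
  · rw [SetLike.mem_coe, Submodule.mem_comap, map_sub, map_smul, deltaFreeE_single,
      deltaFreeE_single, ← Submodule.Quotient.eq, Submodule.Quotient.mk_smul]
    exact mk_deltaGenE_of_evenRel h

/-- The coboundary operator `δ_e` on the quotient space `De`. -/
noncomputable def coboundDe : De →ₗ[ℝ] De :=
  evenRelations.mapQ evenRelations deltaFreeE evenRelations_le_comap_deltaFreeE

theorem coboundDe_cls (g : EvenGraph) :
    coboundDe (cls g) = Submodule.Quotient.mk (deltaGenE g) := by
  rw [cls, coboundDe, Submodule.mapQ_apply, deltaFreeE_single]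

theorem span_range_cls : Submodule.span ℝ (Set.range cls) = ⊤ := by
  have h : Set.range cls =
      evenRelations.mkQ '' Set.range fun g : EvenGraph => Finsupp.single g (1 : ℝ) :=
    Set.range_comp _ _
  rw [h, Submodule.span_image, ← Finsupp.coe_basisSingleOne, Finsupp.basisSingleOne.span_eq,
    Submodule.map_top, Submodule.range_mkQ]

theorem coboundDe_cobound (hg : g.IsAdmissible) : coboundDe g.cobound = 0 := by
  rw [cobound, map_sum]
  refine (Finset.sum_congr rfl fun k _ => ?_).trans (sum_cobound_contract g)
  split_ifs with hk
  · rw [map_smul, coboundDe_cls, mk_deltaGenE_of_isValid (isValid_contract hg.1 hk)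
      (not_hasInternalLoop_contract hg hk)]
  · exact map_zero coboundDe

theorem coboundDe_comp_coboundDe : coboundDe ∘ₗ coboundDe = 0 := by
  refine LinearMap.ext_on_range span_range_cls fun g => ?_
  rw [LinearMap.comp_apply, LinearMap.zero_apply, coboundDe_cls]
  by_cases hg : g.IsAdmissible
  · rw [mk_deltaGenE hg, coboundDe_cobound hg]
  · rw [deltaGenE_eq_zero hg, Submodule.Quotient.mk_zero, map_zero]

theorem ordZ_eq (g : EvenGraph) : g.ordZ = g.cells.length - g.nv := by
  rw [ordZ, numEdges, length_cells, nv]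
  push_cast
  ring

theorem degZ_eq (g : EvenGraph) : g.degZ = 2 * g.cells.length - 3 * g.nv := by
  rw [degZ, numEdges, length_cells, nv]
  push_cast
  ring

theorem ordZ_contract (hg : g.IsValid) {k : ℕ} (hk : g.Contractible k) :
    (g.contract k).ordZ = g.ordZ := by
  have hcells := hk.lt_length
  have hnv := (hg.cell_lt hk).1
  rw [ordZ_eq, ordZ_eq, length_cells_contract hk, nv_contract hg hk]
  omega

theorem degZ_contract (hg : g.IsValid) {k : ℕ} (hk : g.Contractible k) :
    (g.contract k).degZ = g.degZ + 1 := by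
  have hcells := hk.lt_length
  have hnv := (hg.cell_lt hk).1
  rw [degZ_eq, degZ_eq, length_cells_contract hk, nv_contract hg hk]
  omega

theorem cobound_mem_evenPiece (hg : g.IsValid) : g.cobound ∈ evenPiece g.ordZ (g.degZ + 1) := by
  refine Submodule.sum_mem _ fun k _ => ?_
  split_ifs with hk
  · exact Submodule.smul_mem _ _ (Submodule.subset_span
      ⟨_, isValid_contract hg hk, ordZ_contract hg hk, degZ_contract hg hk, rfl⟩)
  · exact zero_mem _

theorem map_coboundDe_evenPiece_le (k m : ℤ) :
    (evenPiece k m).map coboundDe ≤ evenPiece k (m + 1) := by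
  rw [evenPiece, Submodule.map_span_le]
  rintro _ ⟨g, hg, rfl, rfl, rfl⟩
  rw [← cls, coboundDe_cls]
  by_cases hadm : g.IsAdmissible
  · rw [mk_deltaGenE hadm]
    exact cobound_mem_evenPiece hg
  · rw [deltaGenE_eq_zero hadm]
    exact zero_mem _

end Operator

end EvenGraph

/-- The contraction operator `δ_e` is well defined on the quotient space
`D_e` (i.e. it descends through the sign relations on decorations, which is the existence
of the linear operator `δ` below together with the first property), it satisfies
`δ_e ∘ δ_e = 0`, and it maps `D_e^{k,m}` into `D_e^{k,m+1}` for every order `k` and every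
degree `m`. -/
theorem even_graph_complex_coboundary :
    ∃ δ : De →ₗ[ℝ] De,
      (∀ g : EvenGraph,
        δ (Submodule.Quotient.mk (p := evenRelations) (Finsupp.single g 1)) =
          Submodule.Quotient.mk (p := evenRelations) (deltaGenE g)) ∧
      (∀ x : De, δ (δ x) = 0) ∧
      (∀ k m : ℤ, (evenPiece k m).map δ ≤ evenPiece k (m + 1)) := by
  exact ⟨EvenGraph.coboundDe, EvenGraph.coboundDe_cls,
    LinearMap.congr_fun EvenGraph.coboundDe_comp_coboundDe, EvenGraph.map_coboundDe_evenPiece_le⟩
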